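/- arXiv:1510.02421 — 3 statements merged into one kernel-verified Lean document; each statement's English description precedes it below -/
import Mathlib

section
/- If n ≥ 3 and t ≥ 3, then M(C_t × K_n) = Z(C_t × K_n) = (n−2)t + 2 if t is odd, and M(C_t × K_n) = Z(C_t × K_n) = (n−2)t + 4 if t is even. -/
namespace PaperPD

open SimpleGraph

variable {V α β : Type*}

/-- Vertices that eventually become blue in the standard zero forcing process
starting from the blue set `B`. -/
inductive ZFClosure (G : SimpleGraph V) (B : Set V) : V → Prop
  | init (v : V) (hv : v ∈ B) : ZFClosure G B v
  | force (u w : V) (hu : ZFClosure G B u) (huw : G.Adj u w)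
      (h : ∀ x, G.Adj u x → x ≠ w → ZFClosure G B x) : ZFClosure G B w

/-- `B` is a zero forcing set of `G`. -/
def IsZeroForcingSet (G : SimpleGraph V) (B : Set V) : Prop :=
  ∀ v, ZFClosure G B v

/-- The zero forcing number `Z(G)`. -/
noncomputable def zeroForcingNumber (G : SimpleGraph V) [Fintype V] : ℕ :=
  sInf {k | ∃ B : Finset V, B.card = k ∧ IsZeroForcingSet G ↑B}

/-- Vertices that eventually become blue in the skew zero forcing process
starting from the blue set `B` (the forcing vertex need not be blue). -/
inductive SkewZFClosure (G : SimpleGraph V) (B : Set V) : V → Prop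
  | init (v : V) (hv : v ∈ B) : SkewZFClosure G B v
  | force (u w : V) (huw : G.Adj u w)
      (h : ∀ x, G.Adj u x → x ≠ w → SkewZFClosure G B x) : SkewZFClosure G B w

/-- `B` is a skew zero forcing set of `G`. -/
def IsSkewZeroForcingSet (G : SimpleGraph V) (B : Set V) : Prop :=
  ∀ v, SkewZFClosure G B v

/-- The skew zero forcing number `Z⁻(G)`. -/
noncomputable def skewZeroForcingNumber (G : SimpleGraph V) [Fintype V] : ℕ :=
  sInf {k | ∃ B : Finset V, B.card = k ∧ IsSkewZeroForcingSet G ↑B}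

/-- The closed neighborhood `N[S]` of a set of vertices. -/
def closedNbhd (G : SimpleGraph V) (S : Set V) : Set V :=
  S ∪ {v | ∃ u ∈ S, G.Adj u v}

/-- `S` is a power dominating set of `G`, i.e. `N[S]` is a zero forcing set. -/
def IsPowerDominatingSet (G : SimpleGraph V) (S : Set V) : Prop :=
  IsZeroForcingSet G (closedNbhd G S)

/-- The power domination number `γ_P(G)`. -/
noncomputable def powerDominationNumber (G : SimpleGraph V) [Fintype V] : ℕ :=
  sInf {k | ∃ S : Finset V, S.card = k ∧ IsPowerDominatingSet G ↑S}

/-- `S` is a dominating set of `G` (`N[S] = V`). -/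
def IsDominatingSet (G : SimpleGraph V) (S : Set V) : Prop :=
  ∀ v, v ∈ closedNbhd G S

/-- The domination number `γ(G)`. -/
noncomputable def dominationNumber (G : SimpleGraph V) [Fintype V] : ℕ :=
  sInf {k | ∃ S : Finset V, S.card = k ∧ IsDominatingSet G ↑S}

/-- `S` is a total dominating set of `G` (`N(S) = V`). -/
def IsTotalDominatingSet (G : SimpleGraph V) (S : Set V) : Prop :=
  ∀ v, ∃ u ∈ S, G.Adj u v

/-- The total domination number `γ_t(G)`. -/
noncomputable def totalDominationNumber (G : SimpleGraph V) [Fintype V] : ℕ :=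
  sInf {k | ∃ S : Finset V, S.card = k ∧ IsTotalDominatingSet G ↑S}

/-- The degree of a vertex. -/
noncomputable def deg (G : SimpleGraph V) (v : V) : ℕ :=
  (G.neighborSet v).ncard

/-- The maximum degree `Δ(G)`. -/
noncomputable def maxDeg (G : SimpleGraph V) [Fintype V] : ℕ :=
  Finset.univ.sup fun v => deg G v

/-- `A` is a symmetric real matrix whose off-diagonal nonzero pattern is
described by the graph `G`, i.e. `A ∈ S(G)`. -/
def MatrixOfGraph (G : SimpleGraph V) (A : Matrix V V ℝ) : Prop :=
  A.IsSymm ∧ ∀ i j, i ≠ j → (A i j ≠ 0 ↔ G.Adj i j)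

/-- The nullity of a square real matrix. -/
noncomputable def nullity [Fintype V] [DecidableEq V] (A : Matrix V V ℝ) : ℕ :=
  Fintype.card V - A.rank

/-- The maximum nullity `M(G)`. -/
noncomputable def maxNullity (G : SimpleGraph V) [Fintype V] [DecidableEq V] : ℕ :=
  sSup {k | ∃ A : Matrix V V ℝ, MatrixOfGraph G A ∧ nullity A = k}

/-- The tensor (direct) product of two simple graphs. -/
def tensorProd (G : SimpleGraph α) (H : SimpleGraph β) : SimpleGraph (α × β) where
  Adj p q := G.Adj p.1 q.1 ∧ H.Adj p.2 q.2
  symm := ⟨fun _ _ h => ⟨h.1.symm, h.2.symm⟩⟩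
  loopless := ⟨fun p h => G.loopless.irrefl p.1 h.1⟩

/-- The lexicographic product of two simple graphs. -/
def lexProd (G : SimpleGraph α) (H : SimpleGraph β) : SimpleGraph (α × β) where
  Adj p q := G.Adj p.1 q.1 ∨ (p.1 = q.1 ∧ H.Adj p.2 q.2)
  symm := ⟨fun _ _ h => h.elim (fun h' => Or.inl h'.symm) (fun h' => Or.inr ⟨h'.1.symm, h'.2.symm⟩)⟩
  loopless := ⟨fun p h => h.elim (fun h' => G.loopless.irrefl p.1 h') (fun h' => H.loopless.irrefl p.2 h'.2)⟩

/-!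
A vector in the kernel of `A ∈ S(G)` that vanishes on a zero forcing set vanishes, so `M(G) ≤ Z(G)`,
and it suffices to exhibit a matrix and a zero forcing set attaining the same value.

The matrix is `H ⊗ D`, where `H` is the skew-symmetric `±1` matrix of the cycle and `D` has entries
`x a - x b` for an injective `x`. Both factors are skew-symmetric, so the product is symmetric, and
since `D` has rank at most two, `rank (H ⊗ D) ≤ 2 * rank H`. The kernel of `H` consists of the
functions with `f (i + 1) = f (i - 1)`: it has dimension one if `t` is odd and two if `t` is even.

For the zero forcing set, all vertices outside two columns `p` and `q` are blue. If the layer `i` is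
blue off `p` and the layer `i + 1` is blue off `q`, then `(i + 1, p)` forces `(i + 2, q)`, so the
layer `i + 2` is blue off `p`. Hence `(0, q)` and `(1, p)` suffice to turn every layer blue off `p`
and off `q` alternately. On an odd cycle the second lap fills in the missing vertices; on an even
cycle a second alternating pattern is started from `(0, p)` and `(1, q)`.
-/

open scoped Matrix Kronecker

section ZeroForcing

theorem ZFClosure.eq_zero_of_mulVec_eq_zero [Fintype V] {G : SimpleGraph V} {A : Matrix V V ℝ}
    (hA : MatrixOfGraph G A) {B : Set V} {x : V → ℝ} (hx : A *ᵥ x = 0) (hxB : ∀ v ∈ B, x v = 0)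
    {v : V} (hv : ZFClosure G B v) : x v = 0 := by
  induction hv with
  | init v hv => exact hxB v hv
  | force u w _ huw _ ihu ih =>
    have hoff : ∀ j ≠ w, A u j * x j = 0 := by
      intro j hjw
      by_cases hadj : G.Adj u j
      · rw [ih j hadj hjw, mul_zero]
      by_cases huj : u = j
      · rw [← huj, ihu, mul_zero]
      · rw [not_not.1 (mt (hA.2 u j huj).1 hadj), zero_mul]
    have hrow : A u w * x w = 0 :=
      (Fintype.sum_eq_single w hoff).symm.trans (congrFun hx u)
    exact (mul_eq_zero.1 hrow).resolve_left ((hA.2 u w huw.ne).2 huw)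

theorem zeroForcingNumber_le [Fintype V] {G : SimpleGraph V} {B : Finset V}
    (hB : IsZeroForcingSet G ↑B) : zeroForcingNumber G ≤ B.card :=
  Nat.sInf_le ⟨B, rfl, hB⟩

theorem exists_isZeroForcingSet_card_eq [Fintype V] (G : SimpleGraph V) :
    ∃ B : Finset V, B.card = zeroForcingNumber G ∧ IsZeroForcingSet G ↑B :=
  Nat.sInf_mem (s := {k | ∃ B : Finset V, B.card = k ∧ IsZeroForcingSet G ↑B})
    ⟨_, Finset.univ, rfl, fun v => .init v (by simp)⟩

end ZeroForcing

section Nullity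

variable [Fintype V] [DecidableEq V] {G : SimpleGraph V} {A : Matrix V V ℝ}

theorem nullity_eq_finrank_ker (A : Matrix V V ℝ) :
    nullity A = Module.finrank ℝ (LinearMap.ker A.mulVecLin) := by
  have h := LinearMap.finrank_range_add_finrank_ker A.mulVecLin
  rw [Module.finrank_fintype_fun_eq_card] at h
  rw [nullity, Matrix.rank, ← h, Nat.add_sub_cancel_left]

theorem card_le_nullity {γ : Type*} [Fintype γ] {c : V → γ} (hc : Function.Surjective c)
    (hA : ∀ f : γ → ℝ, A *ᵥ (f ∘ c) = 0) : Fintype.card γ ≤ nullity A := by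
  rw [nullity_eq_finrank_ker, ← Module.finrank_fintype_fun_eq_card ℝ]
  exact LinearMap.finrank_le_finrank_of_injective
    (f := (LinearMap.funLeft ℝ ℝ c).codRestrict (LinearMap.ker A.mulVecLin) hA)
    ((LinearMap.injective_codRestrict_iff hA).2
      (LinearMap.funLeft_injective_of_surjective ℝ ℝ c hc))

theorem nullity_le_card_of_isZeroForcingSet (hA : MatrixOfGraph G A) {B : Finset V}
    (hB : IsZeroForcingSet G ↑B) : nullity A ≤ B.card := by
  let restrict : LinearMap.ker A.mulVecLin →ₗ[ℝ] (B → ℝ) :=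
    LinearMap.funLeft ℝ ℝ (Subtype.val : B → V) ∘ₗ (LinearMap.ker A.mulVecLin).subtype
  have hinj : Function.Injective restrict := by
    rw [injective_iff_map_eq_zero]
    rintro ⟨x, hx⟩ hxB
    ext v
    exact (hB v).eq_zero_of_mulVec_eq_zero hA hx fun b hb => congrFun hxB ⟨b, hb⟩
  calc nullity A = Module.finrank ℝ (LinearMap.ker A.mulVecLin) := nullity_eq_finrank_ker A
    _ ≤ Module.finrank ℝ (B → ℝ) := LinearMap.finrank_le_finrank_of_injective hinj
    _ = B.card := by rw [Module.finrank_fintype_fun_eq_card, Fintype.card_coe]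

theorem nullity_le_maxNullity (hA : MatrixOfGraph G A) : nullity A ≤ maxNullity G :=
  le_csSup ⟨Fintype.card V, by rintro _ ⟨A, -, rfl⟩; exact Nat.sub_le _ _⟩ ⟨A, hA, rfl⟩

theorem maxNullity_le_zeroForcingNumber (G : SimpleGraph V) :
    maxNullity G ≤ zeroForcingNumber G := by
  obtain ⟨B, hcard, hB⟩ := exists_isZeroForcingSet_card_eq G
  refine csSup_le' ?_
  rintro _ ⟨A, hA, rfl⟩
  exact hcard ▸ nullity_le_card_of_isZeroForcingSet hA hB

theorem maxNullity_eq_and_zeroForcingNumber_eq {k : ℕ} (hM : k ≤ maxNullity G)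
    (hZ : zeroForcingNumber G ≤ k) : maxNullity G = k ∧ zeroForcingNumber G = k :=
  have hMZ := maxNullity_le_zeroForcingNumber G
  ⟨(hMZ.trans hZ).antisymm hM, hZ.antisymm (hM.trans hMZ)⟩

end Nullity

section Rank

variable {m n K : Type*} [Fintype n] [Field K]

theorem rank_add_le [Finite m] (A B : Matrix m n K) : (A + B).rank ≤ A.rank + B.rank := by
  have hrange : LinearMap.range (A + B).mulVecLin ≤
      LinearMap.range A.mulVecLin ⊔ LinearMap.range B.mulVecLin := by
    rintro _ ⟨x, rfl⟩
    rw [Matrix.mulVecLin_add, LinearMap.add_apply]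
    exact Submodule.add_mem_sup ⟨x, rfl⟩ ⟨x, rfl⟩
  exact (Submodule.finrank_mono hrange).trans
    (Submodule.finrank_add_le_finrank_add_finrank _ _)

theorem rank_kronecker_vecMulVec_le [Finite m] [Finite α] [Fintype β]
    (H : Matrix m n K) (x : α → K) (y : β → K) :
    (H ⊗ₖ Matrix.vecMulVec x y).rank ≤ H.rank := by
  classical
  have := Fintype.ofFinite m
  have := Fintype.ofFinite α
  have hfactor : H ⊗ₖ Matrix.vecMulVec x y =
      ((1 : Matrix m m K) ⊗ₖ Matrix.replicateCol Unit x) * (H ⊗ₖ (1 : Matrix Unit Unit K)) *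
        ((1 : Matrix n n K) ⊗ₖ Matrix.replicateRow Unit y) := by
    rw [← Matrix.mul_kronecker_mul, ← Matrix.mul_kronecker_mul, Matrix.one_mul, Matrix.mul_one,
      Matrix.mul_one, ← Matrix.vecMulVec_eq]
  have hunit : H ⊗ₖ (1 : Matrix Unit Unit K) = H.submatrix Prod.fst Prod.fst := by
    ext; simp
  calc (H ⊗ₖ Matrix.vecMulVec x y).rank ≤ (H ⊗ₖ (1 : Matrix Unit Unit K)).rank :=
        hfactor ▸ (Matrix.rank_mul_le_left _ _).trans (Matrix.rank_mul_le_right _ _)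
    _ = H.rank := by
        rw [hunit]
        exact Matrix.rank_submatrix H (Equiv.prodPUnit m) (Equiv.prodPUnit n)

end Rank

section TensorComplete

/-- The skew-symmetric matrix of rank at most two with entries `x a - x b`. For injective `x` its
off-diagonal entries are nonzero, so it realizes the pattern of a complete graph. -/
def differenceMatrix (x : β → ℝ) : Matrix β β ℝ :=
  Matrix.vecMulVec x 1 - Matrix.vecMulVec 1 x

theorem differenceMatrix_apply (x : β → ℝ) (a b : β) : differenceMatrix x a b = x a - x b := by
  simp [differenceMatrix]

theorem matrixOfGraph_kronecker_differenceMatrix {G : SimpleGraph α} {H : Matrix α α ℝ}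
    (hskew : Hᵀ = -H) (hH : ∀ i j, H i j ≠ 0 ↔ G.Adj i j) {x : β → ℝ}
    (hx : Function.Injective x) :
    MatrixOfGraph (tensorProd G (⊤ : SimpleGraph β)) (H ⊗ₖ differenceMatrix x) := by
  refine ⟨?_, fun p q _ => ?_⟩
  · ext p q
    have hpq : H q.1 p.1 = -H p.1 q.1 := congrFun₂ hskew p.1 q.1
    simp only [Matrix.transpose_apply, Matrix.kroneckerMap_apply, differenceMatrix_apply, hpq]
    ring
  · simp only [Matrix.kroneckerMap_apply, differenceMatrix_apply, tensorProd, top_adj,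
      mul_ne_zero_iff, hH, sub_ne_zero, hx.ne_iff]

theorem rank_kronecker_differenceMatrix_le [Fintype α] [Fintype β] (H : Matrix α α ℝ)
    (x : β → ℝ) : (H ⊗ₖ differenceMatrix x).rank ≤ 2 * H.rank := by
  have hsplit : H ⊗ₖ differenceMatrix x =
      H ⊗ₖ Matrix.vecMulVec x 1 + H ⊗ₖ Matrix.vecMulVec (-1) x := by
    rw [← Matrix.kronecker_add, differenceMatrix, Matrix.neg_vecMulVec, sub_eq_add_neg]
  rw [hsplit, two_mul]
  exact (rank_add_le _ _).trans (Nat.add_le_add (rank_kronecker_vecMulVec_le H x 1)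
    (rank_kronecker_vecMulVec_le H (-1) x))

theorem le_maxNullity_tensorProd_top [Fintype α] [DecidableEq α] [Fintype β] [DecidableEq β]
    [Nontrivial β] {G : SimpleGraph α} {H : Matrix α α ℝ} (hskew : Hᵀ = -H)
    (hH : ∀ i j, H i j ≠ 0 ↔ G.Adj i j) :
    (Fintype.card β - 2) * Fintype.card α + 2 * nullity H ≤
      maxNullity (tensorProd G (⊤ : SimpleGraph β)) := by
  let x : β → ℝ := fun b => (Fintype.equivFin β b : ℕ)
  have hx : Function.Injective x :=
    Nat.cast_injective.comp (Fin.val_injective.comp (Fintype.equivFin β).injective)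
  refine le_trans ?_ (nullity_le_maxNullity (matrixOfGraph_kronecker_differenceMatrix hskew hH hx))
  have hrank := rank_kronecker_differenceMatrix_le H x
  have hwidth := H.rank_le_card_width
  obtain ⟨r, hr⟩ := Nat.exists_eq_add_of_le' (Fintype.one_lt_card (α := β))
  have hcard : Fintype.card α * Fintype.card β = r * Fintype.card α + 2 * Fintype.card α := by
    rw [hr]; ring
  have hsub : Fintype.card β - 2 = r := by omega
  rw [nullity, nullity, Fintype.card_prod, hcard, hsub]
  omega

theorem ZFClosure.tensorProd_top_of_ne {G : SimpleGraph α} {B : Set (α × β)} {u w : α}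
    (huw : G.Adj u w) {a c : β}
    (hua : ZFClosure (tensorProd G (⊤ : SimpleGraph β)) B (u, a))
    (hside : ∀ v, G.Adj u v → v ≠ w → ∀ b ≠ a, ZFClosure (tensorProd G ⊤) B (v, b))
    (hw : ∀ b, b ≠ a → b ≠ c → ZFClosure (tensorProd G ⊤) B (w, b)) {b : β} (hb : b ≠ a) :
    ZFClosure (tensorProd G ⊤) B (w, b) := by
  by_cases hbc : b = c
  · subst hbc
    refine .force (u, a) (w, b) hua ⟨huw, hb.symm⟩ ?_
    rintro ⟨v, d⟩ ⟨huv, had⟩ hne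
    by_cases hvw : v = w
    · subst hvw
      exact hw d had.symm fun hdb => hne (by rw [hdb])
    · exact hside v huv hvw d had.symm
  · exact hw b hb hbc

end TensorComplete

section SkewCirculant

variable {Γ : Type*} [AddCommGroup Γ] [DecidableEq Γ]

/-- The weighted adjacency matrix of the circulant graph of `{g}` in which each edge is oriented
along `g`, with weight `1` in one direction and `-1` in the other. -/
def skewCirculant (g : Γ) : Matrix Γ Γ ℝ :=
  Matrix.circulant (Pi.single g 1 - Pi.single (-g) 1)

theorem skewCirculant_apply (g i j : Γ) :
    skewCirculant g i j = (if i - j = g then 1 else 0) - (if i - j = -g then 1 else 0) := by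
  simp [skewCirculant, Matrix.circulant_apply, Pi.single_apply]

theorem transpose_skewCirculant (g : Γ) : (skewCirculant g)ᵀ = -skewCirculant g := by
  ext i j
  have hswap : ∀ k, j - i = k ↔ i - j = -k := fun k => by rw [← neg_sub, neg_eq_iff_eq_neg]
  simp [skewCirculant_apply, hswap]

theorem skewCirculant_ne_zero_iff {g : Γ} (hg : g ≠ -g) (i j : Γ) :
    skewCirculant g i j ≠ 0 ↔ (circulantGraph {g}).Adj i j := by
  have hentry : skewCirculant g i j ≠ 0 ↔ i - j = g ∨ i - j = -g := by
    rw [skewCirculant_apply]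
    by_cases hpos : i - j = g
    · simp [hpos, hg]
    · simp [hpos]
  have hij : j - i = g ↔ i - j = -g := by rw [← neg_sub, neg_eq_iff_eq_neg]
  have hne : i - j = g ∨ i - j = -g → i ≠ j := by
    rintro h rfl
    have hg₀ : g = 0 := by simpa [eq_comm] using h
    exact hg (by rw [hg₀, neg_zero])
  rw [hentry, circulantGraph_adj, Set.mem_singleton_iff, Set.mem_singleton_iff, hij]
  exact ⟨fun h => ⟨hne h, h⟩, And.right⟩

theorem skewCirculant_mulVec [Fintype Γ] (g : Γ) (f : Γ → ℝ) (i : Γ) :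
    (skewCirculant g *ᵥ f) i = f (i - g) - f (i + g) := by
  have hsub : ∀ j, i - j = g ↔ j = i - g := fun j => by grind
  have hadd : ∀ j, i - j = -g ↔ j = i + g := fun j => by grind
  simp [Matrix.mulVec, dotProduct, skewCirculant_apply, sub_mul, Finset.sum_sub_distrib, hsub, hadd]

theorem card_le_nullity_skewCirculant [Fintype Γ] {γ : Type*} [Fintype γ] {g : Γ} {c : Γ → γ}
    (hc : Function.Surjective c) (hper : Function.Periodic c (g + g)) :
    Fintype.card γ ≤ nullity (skewCirculant g) := by
  refine card_le_nullity hc fun f => funext fun i => ?_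
  have hi : c (i + g) = c (i - g) := by
    rw [← hper (i - g)]
    congr 1
    abel
  simp only [skewCirculant_mulVec, Function.comp_apply, hi, sub_self, Pi.zero_apply]

theorem le_maxNullity_circulant [Fintype Γ] [Fintype β] [DecidableEq β] [Nontrivial β]
    {γ : Type*} [Fintype γ] {g : Γ} (hg : g ≠ -g) {c : Γ → γ} (hc : Function.Surjective c)
    (hper : Function.Periodic c (g + g)) :
    (Fintype.card β - 2) * Fintype.card Γ + 2 * Fintype.card γ ≤
      maxNullity (tensorProd (circulantGraph {g}) (⊤ : SimpleGraph β)) :=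
  (Nat.add_le_add_left (Nat.mul_le_mul_left 2 (card_le_nullity_skewCirculant hc hper)) _).trans
    (le_maxNullity_tensorProd_top (transpose_skewCirculant g) (skewCirculant_ne_zero_iff hg))

end SkewCirculant

section CirculantForcing

variable {Γ : Type*} [AddCommGroup Γ] {g : Γ} {p q : β}

theorem circulantGraph_singleton_adj_add (hg : g ≠ 0) (i : Γ) :
    (circulantGraph {g}).Adj i (i + g) := by
  simp [hg]

theorem eq_sub_of_circulantGraph_singleton_adj {i j : Γ} (hij : (circulantGraph {g}).Adj i j)
    (hne : j ≠ i + g) : j = i - g := by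
  simp only [circulantGraph_adj, Set.mem_singleton_iff] at hij
  grind

theorem ZFClosure.circulant_step (hg : g ≠ 0) {B : Set (Γ × β)}
    (hcol : ∀ i b, b ≠ p → b ≠ q → (i, b) ∈ B) (hpq : p ≠ q) {i : Γ}
    (h₀ : ∀ b ≠ p, ZFClosure (tensorProd (circulantGraph {g}) ⊤) B (i, b))
    (h₁ : ∀ b ≠ q, ZFClosure (tensorProd (circulantGraph {g}) ⊤) B (i + g, b)) :
    ∀ b ≠ p, ZFClosure (tensorProd (circulantGraph {g}) ⊤) B (i + g + g, b) := by
  intro b hb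
  refine .tensorProd_top_of_ne (circulantGraph_singleton_adj_add hg (i + g)) (h₁ p hpq) ?_
    (fun b hbp hbq => .init _ (hcol _ b hbp hbq)) hb
  intro v hv hne
  rw [eq_sub_of_circulantGraph_singleton_adj hv hne, add_sub_cancel_right]
  exact h₀

theorem ZFClosure.circulant_alternating (hg : g ≠ 0) {B : Set (Γ × β)}
    (hcol : ∀ i b, b ≠ p → b ≠ q → (i, b) ∈ B) (hpq : p ≠ q)
    (h₀ : (0, q) ∈ B) (h₁ : (g, p) ∈ B) (k : ℕ) :
    (∀ b ≠ p, ZFClosure (tensorProd (circulantGraph {g}) ⊤) B ((2 * k) • g, b)) ∧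
      ∀ b ≠ q, ZFClosure (tensorProd (circulantGraph {g}) ⊤) B ((2 * k + 1) • g, b) := by
  induction k with
  | zero =>
    constructor <;> intro b hb <;> refine .init _ ?_
    · rcases eq_or_ne b q with rfl | hbq
      · simpa using h₀
      · exact hcol _ b hb hbq
    · rcases eq_or_ne b p with rfl | hbp
      · simpa using h₁
      · exact hcol _ b hbp hb
  | succ k ih =>
    obtain ⟨heven, hodd⟩ := ih
    rw [succ_nsmul] at hodd
    have heven' := circulant_step hg hcol hpq heven hodd
    have hodd' := circulant_step hg (fun i b hbq hbp => hcol i b hbp hbq) hpq.symm hodd heven'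
    rw [show 2 * (k + 1) = 2 * k + 1 + 1 by ring]
    simp only [succ_nsmul]
    exact ⟨heven', hodd'⟩

theorem isZeroForcingSet_circulant (hg : g ≠ 0) (hgen : ∀ i : Γ, ∃ k : ℕ, k • g = i)
    {B : Set (Γ × β)} (hcol : ∀ i b, b ≠ p → b ≠ q → (i, b) ∈ B) (hpq : p ≠ q)
    (hp₀ : (0, p) ∈ B) (hq₀ : (0, q) ∈ B) (hp₁ : (g, p) ∈ B) (hq₁ : (g, q) ∈ B) :
    IsZeroForcingSet (tensorProd (circulantGraph {g}) (⊤ : SimpleGraph β)) B := by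
  rintro ⟨i, b⟩
  obtain ⟨k, rfl⟩ := hgen i
  have hcol' : ∀ i b, b ≠ q → b ≠ p → (i, b) ∈ B := fun i b hbq hbp => hcol i b hbp hbq
  have hpqB := ZFClosure.circulant_alternating hg hcol hpq hq₀ hp₁
  have hqpB := ZFClosure.circulant_alternating hg hcol' hpq.symm hp₀ hq₁
  obtain ⟨m, rfl | rfl⟩ := k.even_or_odd'
  · rcases ne_or_eq b p with hb | rfl
    · exact (hpqB m).1 b hb
    · exact (hqpB m).1 b hpq
  · rcases ne_or_eq b q with hb | rfl
    · exact (hpqB m).2 b hb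
    · exact (hqpB m).2 b hpq.symm

theorem isZeroForcingSet_circulant_of_odd [Fintype Γ] (hodd : Odd (Fintype.card Γ)) (hg : g ≠ 0)
    (hgen : ∀ i : Γ, ∃ k : ℕ, k • g = i) {B : Set (Γ × β)}
    (hcol : ∀ i b, b ≠ p → b ≠ q → (i, b) ∈ B) (hpq : p ≠ q)
    (hq₀ : (0, q) ∈ B) (hp₁ : (g, p) ∈ B) :
    IsZeroForcingSet (tensorProd (circulantGraph {g}) (⊤ : SimpleGraph β)) B := by
  rintro ⟨i, b⟩
  have halt := ZFClosure.circulant_alternating hg hcol hpq hq₀ hp₁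
  -- Going once more around the odd cycle changes the parity of the number of steps.
  have hlaps : ∃ k l : ℕ, (2 * k) • g = i ∧ (2 * l + 1) • g = i := by
    obtain ⟨k, rfl⟩ := hgen i
    obtain ⟨r, hr⟩ := hodd
    have hlap : (k + (2 * r + 1)) • g = k • g := by
      rw [add_nsmul, ← hr, card_nsmul_eq_zero, add_zero]
    obtain ⟨m, rfl | rfl⟩ := k.even_or_odd'
    · exact ⟨m, m + r, rfl, hlap ▸ by congr 1; ring⟩
    · exact ⟨m + r + 1, m, hlap ▸ by congr 1; ring, rfl⟩
  obtain ⟨k, l, hk, hl⟩ := hlaps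
  rcases ne_or_eq b p with hb | rfl
  · exact hk ▸ (halt k).1 b hb
  · exact hl ▸ (halt l).2 b hpq

theorem zeroForcingNumber_le_of_compl_columns_union [Fintype α] [Fintype β]
    {G : SimpleGraph (α × β)} (hpq : p ≠ q) (S : Finset (α × β))
    (hS : IsZeroForcingSet G ({x | x.2 ≠ p ∧ x.2 ≠ q} ∪ ↑S)) :
    zeroForcingNumber G ≤ (Fintype.card β - 2) * Fintype.card α + S.card := by
  classical
  have hforce : IsZeroForcingSet G ↑(Finset.univ ×ˢ {p, q}ᶜ ∪ S) := by
    convert hS using 1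
    ext
    simp [and_comm]
  refine (zeroForcingNumber_le hforce).trans ((Finset.card_union_le _ _).trans_eq ?_)
  rw [Finset.card_product, Finset.card_compl, Finset.card_pair hpq, Finset.card_univ, mul_comm]

theorem zeroForcingNumber_circulant_le [Fintype Γ] [Fintype β] [Nontrivial β] (hg : g ≠ 0)
    (hgen : ∀ i : Γ, ∃ k : ℕ, k • g = i) :
    zeroForcingNumber (tensorProd (circulantGraph {g}) (⊤ : SimpleGraph β)) ≤
      (Fintype.card β - 2) * Fintype.card Γ + 4 := by
  classical
  obtain ⟨p, q, hpq⟩ := exists_pair_ne β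
  refine (zeroForcingNumber_le_of_compl_columns_union hpq {(0, p), (0, q), (g, p), (g, q)} ?_).trans
    (Nat.add_le_add_left Finset.card_le_four _)
  exact isZeroForcingSet_circulant hg hgen (fun _ _ hp hq => .inl ⟨hp, hq⟩) hpq
    (by simp) (by simp) (by simp) (by simp)

theorem zeroForcingNumber_circulant_le_of_odd [Fintype Γ] [Fintype β] [Nontrivial β]
    (hodd : Odd (Fintype.card Γ)) (hg : g ≠ 0) (hgen : ∀ i : Γ, ∃ k : ℕ, k • g = i) :
    zeroForcingNumber (tensorProd (circulantGraph {g}) (⊤ : SimpleGraph β)) ≤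
      (Fintype.card β - 2) * Fintype.card Γ + 2 := by
  classical
  obtain ⟨p, q, hpq⟩ := exists_pair_ne β
  refine (zeroForcingNumber_le_of_compl_columns_union hpq {(0, q), (g, p)} ?_).trans
    (Nat.add_le_add_left Finset.card_le_two _)
  exact isZeroForcingSet_circulant_of_odd hodd hg hgen (fun _ _ hp hq => .inl ⟨hp, hq⟩) hpq
    (by simp) (by simp)

end CirculantForcing

section Cycle

variable {t : ℕ}

theorem cycleGraph_eq_circulantGraph_one [NeZero t] : cycleGraph t = circulantGraph {1} := by
  obtain ⟨n, rfl⟩ := Nat.exists_eq_succ_of_ne_zero (NeZero.ne t)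
  exact cycleGraph_eq_circulantGraph n

theorem fin_one_ne_neg_one [NeZero t] (ht : 3 ≤ t) : (1 : Fin t) ≠ -1 := by
  obtain ⟨m, rfl⟩ := Nat.exists_eq_add_of_le' ht
  rw [Ne, eq_neg_iff_add_eq_zero, Fin.ext_iff, Fin.val_add]
  simp [Nat.mod_eq_of_lt]

theorem exists_nsmul_fin_one_eq [NeZero t] (i : Fin t) : ∃ k : ℕ, k • (1 : Fin t) = i := by
  open Fin.CommRing in
  exact ⟨i, by rw [nsmul_one, Fin.cast_val_eq_self]⟩

theorem surjective_fin_val_cast_two (ht : 2 ≤ t) :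
    Function.Surjective (fun i : Fin t => (i.val : ZMod 2)) := by
  intro x
  exact ⟨⟨x.val, (ZMod.val_lt x).trans_le ht⟩, ZMod.natCast_zmod_val x⟩

theorem periodic_fin_val_cast_two [NeZero t] (ht : Even t) :
    Function.Periodic (fun i : Fin t => (i.val : ZMod 2)) (1 + 1) := by
  intro i
  rw [ZMod.natCast_eq_natCast_iff']
  simp [Fin.val_add, Nat.mod_mod_of_dvd _ ht.two_dvd]

end Cycle

theorem stmt5_general [Fintype β] [DecidableEq β] [Nontrivial β] {t : ℕ} (ht : 3 ≤ t) :
    (Odd t →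
      maxNullity (tensorProd (cycleGraph t) (⊤ : SimpleGraph β)) = (Fintype.card β - 2) * t + 2 ∧
      zeroForcingNumber (tensorProd (cycleGraph t) (⊤ : SimpleGraph β)) =
        (Fintype.card β - 2) * t + 2) ∧
    (Even t →
      maxNullity (tensorProd (cycleGraph t) (⊤ : SimpleGraph β)) = (Fintype.card β - 2) * t + 4 ∧
      zeroForcingNumber (tensorProd (cycleGraph t) (⊤ : SimpleGraph β)) =
        (Fintype.card β - 2) * t + 4) := by
  have : NeZero t := ⟨by omega⟩
  have hskew : (1 : Fin t) ≠ -1 := fin_one_ne_neg_one ht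
  have hne : (1 : Fin t) ≠ 0 := fun h => hskew (by rw [h, neg_zero])
  rw [cycleGraph_eq_circulantGraph_one]
  refine ⟨fun hodd => maxNullity_eq_and_zeroForcingNumber_eq ?_ ?_,
    fun heven => maxNullity_eq_and_zeroForcingNumber_eq ?_ ?_⟩
  · simpa using le_maxNullity_circulant (β := β) hskew
      (Function.surjective_to_subsingleton fun _ => ()) fun _ => rfl
  · simpa using zeroForcingNumber_circulant_le_of_odd (β := β)
      (by rwa [Fintype.card_fin]) hne exists_nsmul_fin_one_eq
  · simpa using le_maxNullity_circulant (β := β) hskew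
      (surjective_fin_val_cast_two (by omega)) (periodic_fin_val_cast_two heven)
  · simpa using zeroForcingNumber_circulant_le (β := β) hne exists_nsmul_fin_one_eq

/-- For `n, t ≥ 3`, `M(C_t × K_n) = Z(C_t × K_n)`, which equals
`(n−2)t + 2` if `t` is odd and `(n−2)t + 4` if `t` is even. -/
theorem stmt5 (t n : ℕ) (ht : 3 ≤ t) (hn : 3 ≤ n) :
    (Odd t →
      maxNullity (tensorProd (cycleGraph t) (⊤ : SimpleGraph (Fin n))) = (n - 2) * t + 2 ∧
      zeroForcingNumber (tensorProd (cycleGraph t) (⊤ : SimpleGraph (Fin n))) = (n - 2) * t + 2) ∧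
    (Even t →
      maxNullity (tensorProd (cycleGraph t) (⊤ : SimpleGraph (Fin n))) = (n - 2) * t + 4 ∧
      zeroForcingNumber (tensorProd (cycleGraph t) (⊤ : SimpleGraph (Fin n))) = (n - 2) * t + 4) := by
  have : Nontrivial (Fin n) := Fin.nontrivial_iff_two_le.2 (by omega)
  simpa only [Fintype.card_fin] using stmt5_general (β := Fin n) ht

end PaperPD
end

section
/- Let G be a finite simple graph that has at least one edge. Then ⌈Z(G)/Δ(G)⌉ ≤ γ_P(G), where Z(G) is the zero forcing number, Δ(G) the maximum degree, and γ_P(G) the power domination number of G. -/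
namespace PaperPD

open SimpleGraph

variable {V α β : Type*}

/-!
To force all of `N[v]` it suffices to color `v` and all but one of its neighbours: `v` itself then
forces the remaining one. This costs `deg v` vertices, or a single one if `v` is isolated. Doing so
at each vertex of a minimum power dominating set gives a zero forcing set with at most
`γ_P(G) * max (Δ(G)) 1` vertices, and `Δ(G) ≥ 1` as soon as `G` has an edge.
-/

section

variable {G : SimpleGraph V} {B C S : Set V} {u v : V}

theorem ZFClosure.of_forall_mem (hC : ∀ x ∈ C, ZFClosure G B x) (hv : ZFClosure G C v) :
    ZFClosure G B v := by
  induction hv with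
  | init x hx => exact hC x hx
  | force x y _ hxy _ ihx ih => exact .force x y ihx hxy ih

theorem ZFClosure.mono (hCB : C ⊆ B) (hv : ZFClosure G C v) : ZFClosure G B v :=
  hv.of_forall_mem fun x hx => .init x (hCB hx)

/-- The closed neighborhood `N[v]` with the neighbor `w` of `v` removed: a smaller set of blue
vertices that still forces all of `N[v]`. The vertex `v` is kept even if `w = v`, and nothing is
removed if `w` is not a neighbor of `v`. -/
def closedNbhdErase (G : SimpleGraph V) (v w : V) : Set V :=
  insert v (G.neighborSet v \ {w})

theorem ZFClosure.closedNbhdErase_of_adj (w : V) (huv : G.Adj u v) :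
    ZFClosure G (closedNbhdErase G u w) v := by
  have init_of_ne {x : V} (hux : G.Adj u x) (hxw : x ≠ w) :
      ZFClosure G (closedNbhdErase G u w) x :=
    .init x (Set.mem_insert_of_mem u ⟨hux, hxw⟩)
  by_cases hvw : v = w
  · subst hvw
    exact .force u v (.init u (Set.mem_insert u _)) huv fun x => init_of_ne
  · exact init_of_ne huv hvw

theorem IsPowerDominatingSet.isZeroForcingSet_biUnion_closedNbhdErase
    (hS : IsPowerDominatingSet G S) (f : V → V) :
    IsZeroForcingSet G (⋃ v ∈ S, closedNbhdErase G v (f v)) := by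
  intro x
  refine (hS x).of_forall_mem ?_
  rintro y (hy | ⟨u, hu, huy⟩)
  · exact .init y (Set.mem_biUnion hy (Set.mem_insert y _))
  · exact (ZFClosure.closedNbhdErase_of_adj (f u) huy).mono
      (Set.subset_biUnion_of_mem (u := fun v => closedNbhdErase G v (f v)) hu)

theorem isPowerDominatingSet_univ (G : SimpleGraph V) : IsPowerDominatingSet G Set.univ :=
  fun v => .init v (.inl (Set.mem_univ v))

theorem exists_ncard_closedNbhdErase_le (G : SimpleGraph V) (v : V) [Finite (G.neighborSet v)] :
    ∃ w, (closedNbhdErase G v w).ncard ≤ max (deg G v) 1 := by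
  rcases (G.neighborSet v).eq_empty_or_nonempty with hv | ⟨w, hw⟩
  · exact ⟨v, by simp [closedNbhdErase, hv]⟩
  · refine ⟨w, le_max_of_le_left ?_⟩
    calc (closedNbhdErase G v w).ncard
        ≤ (G.neighborSet v \ {w}).ncard + 1 := Set.ncard_insert_le _ _
      _ = deg G v := Set.ncard_sdiff_singleton_add_one hw

variable [Fintype V]

theorem deg_le_maxDeg (G : SimpleGraph V) (v : V) : deg G v ≤ maxDeg G :=
  Finset.le_sup (f := deg G) (Finset.mem_univ v)

theorem maxDeg_pos_of_adj (huv : G.Adj u v) : 0 < maxDeg G :=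
  calc 0 < deg G u := (Set.ncard_pos).2 ⟨v, huv⟩
    _ ≤ maxDeg G := deg_le_maxDeg G u

theorem IsZeroForcingSet.zeroForcingNumber_le_ncard (hB : IsZeroForcingSet G B) :
    zeroForcingNumber G ≤ B.ncard := by
  classical
  exact Nat.sInf_le ⟨B.toFinset, (Set.ncard_eq_toFinset_card' B).symm, by rwa [Set.coe_toFinset]⟩

theorem IsPowerDominatingSet.zeroForcingNumber_le_sum {S : Finset V}
    (hS : IsPowerDominatingSet G S) : zeroForcingNumber G ≤ ∑ v ∈ S, max (deg G v) 1 := by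
  choose f hf using fun v => exists_ncard_closedNbhdErase_le G v
  calc zeroForcingNumber G
      ≤ (⋃ v ∈ S, closedNbhdErase G v (f v)).ncard :=
        (hS.isZeroForcingSet_biUnion_closedNbhdErase f).zeroForcingNumber_le_ncard
    _ ≤ ∑ v ∈ S, (closedNbhdErase G v (f v)).ncard := S.set_ncard_biUnion_le _
    _ ≤ ∑ v ∈ S, max (deg G v) 1 := Finset.sum_le_sum fun v _ => hf v

theorem exists_isPowerDominatingSet_card_eq_powerDominationNumber (G : SimpleGraph V) :
    ∃ S : Finset V, S.card = powerDominationNumber G ∧ IsPowerDominatingSet G S :=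
  Nat.sInf_mem (s := {k | ∃ S : Finset V, S.card = k ∧ IsPowerDominatingSet G S})
    ⟨_, Finset.univ, rfl, by simpa only [Finset.coe_univ] using isPowerDominatingSet_univ G⟩

theorem zeroForcingNumber_le_powerDominationNumber_mul_max_maxDeg (G : SimpleGraph V) :
    zeroForcingNumber G ≤ powerDominationNumber G * max (maxDeg G) 1 := by
  obtain ⟨S, hcard, hS⟩ := exists_isPowerDominatingSet_card_eq_powerDominationNumber G
  calc zeroForcingNumber G
      ≤ ∑ v ∈ S, max (deg G v) 1 := hS.zeroForcingNumber_le_sum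
    _ ≤ S.card * max (maxDeg G) 1 :=
        Finset.sum_le_card_nsmul _ _ _ fun v _ => max_le_max_right 1 (deg_le_maxDeg G v)
    _ = powerDominationNumber G * max (maxDeg G) 1 := by rw [hcard]

end

/-- If `G` has at least one edge, then `⌈Z(G)/Δ(G)⌉ ≤ γ_P(G)`. -/
theorem stmt9 {V : Type*} [Fintype V] (G : SimpleGraph V) (hE : ∃ u v, G.Adj u v) :
    ⌈(zeroForcingNumber G : ℚ) / (maxDeg G : ℚ)⌉ ≤ (powerDominationNumber G : ℤ) := by
  obtain ⟨u, v, huv⟩ := hE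
  have hpos : 0 < maxDeg G := maxDeg_pos_of_adj huv
  have hle := zeroForcingNumber_le_powerDominationNumber_mul_max_maxDeg G
  rw [max_eq_left (Nat.succ_le_of_lt hpos)] at hle
  rw [Int.ceil_le, div_le_iff₀ (by exact_mod_cast hpos)]
  exact_mod_cast hle

end PaperPD
end

section
/- Let t ≥ 2. Suppose either t is odd and n ≥ t, or t is even and n ≥ t/2 + 2. Then γ_P(P_t × K_n) = ⌈t/2⌉ if t ≢ 2 (mod 4), while if t ≡ 2 (mod 4) then γ_P(P_t × K_n) equals t/2 or t/2 + 1. -/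
namespace PaperPD

open SimpleGraph

variable {V α β : Type*}

/-!
For a graph `G` without isolated vertices and `n ≥ 4`, `γ_t(G) ≤ γ_P(G × K_n)`: three vertices of
one layer `{i} × K_n` always form a fort, so a layer not adjacent to any layer meeting `S` contains
at least `n - 2 ≥ 2` vertices of `S`. Projecting `S` to `G` and spending the surplus vertex of each
such layer on a neighbor of `i` gives a total dominating set. Conversely, a total dominating set `D`
of `G` which is also skew zero forcing gives the power dominating set `D × {z}`; in a path every
total dominating set is skew zero forcing. Hence `γ_P(P_t × K_n) = γ_t(P_t)` for `n ≥ 4`, and the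
vertices congruent to `0` or `1` mod `4` form a maximum open packing, which computes `γ_t(P_t)`.
-/

section Parameters

variable [Fintype V] {G : SimpleGraph V}

theorem powerDominationNumber_le {S : Finset V} (hS : IsPowerDominatingSet G ↑S) :
    powerDominationNumber G ≤ S.card :=
  Nat.sInf_le ⟨S, rfl, hS⟩

theorem exists_isPowerDominatingSet_card_eq (G : SimpleGraph V) :
    ∃ S : Finset V, S.card = powerDominationNumber G ∧ IsPowerDominatingSet G ↑S :=
  Nat.sInf_mem (s := {k | ∃ S : Finset V, S.card = k ∧ IsPowerDominatingSet G ↑S})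
    ⟨_, Finset.univ, rfl, fun v => .init v (.inl (by simp))⟩

theorem totalDominationNumber_le {D : Finset V} (hD : IsTotalDominatingSet G ↑D) :
    totalDominationNumber G ≤ D.card :=
  Nat.sInf_le ⟨D, rfl, hD⟩

theorem exists_isTotalDominatingSet_card_eq (hG : ∀ v, ∃ u, G.Adj u v) :
    ∃ D : Finset V, D.card = totalDominationNumber G ∧ IsTotalDominatingSet G ↑D :=
  Nat.sInf_mem (s := {k | ∃ D : Finset V, D.card = k ∧ IsTotalDominatingSet G ↑D})
    ⟨_, Finset.univ, rfl, fun v => (hG v).imp fun _ hu => ⟨by simp, hu⟩⟩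

end Parameters

section Forts

variable {G : SimpleGraph V} {B S W : Set V}

/-- A fort of `G`: a nonempty set `W` such that no vertex outside `W` has exactly one neighbor in
`W`. Forts are the obstructions to zero forcing. -/
def IsFort (G : SimpleGraph V) (W : Set V) : Prop :=
  W.Nonempty ∧ ∀ u ∉ W, ∀ w ∈ W, G.Adj u w → ∃ x ∈ W, G.Adj u x ∧ x ≠ w

theorem IsFort.notMem_of_zfClosure (hW : IsFort G W) (hB : Disjoint B W) {v : V}
    (hv : ZFClosure G B v) : v ∉ W := by
  induction hv with
  | init v hv => exact hB.notMem_of_mem_left hv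
  | force u w _ huw _ hu ih =>
    intro hw
    obtain ⟨x, hx, hux, hxw⟩ := hW.2 u hu w hw huw
    exact ih x hux hxw hx

theorem IsPowerDominatingSet.exists_mem_closedNbhd_of_isFort (hS : IsPowerDominatingSet G S)
    (hW : IsFort G W) :
    ∃ w ∈ W, w ∈ closedNbhd G S := by
  by_contra! hdisj
  obtain ⟨w, hw⟩ := hW.1
  exact hW.notMem_of_zfClosure (Set.disjoint_right.2 hdisj) (hS w) hw

theorem isFort_layer (G : SimpleGraph α) (i : α) {T : Finset β} (hT : 3 ≤ T.card) :
    IsFort (tensorProd G (⊤ : SimpleGraph β)) ({i} ×ˢ ↑T) := by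
  classical
  have exists_avoiding (a b : β) : ∃ c ∈ T, c ≠ a ∧ c ≠ b := by
    obtain ⟨c, hcT, hc⟩ := Finset.exists_mem_notMem_of_card_lt_card
      (Finset.card_le_two.trans_lt hT : ({a, b} : Finset β).card < T.card)
    exact ⟨c, hcT, by simpa using hc⟩
  constructor
  · obtain ⟨b, hb⟩ := Finset.card_pos.1 (by omega : 0 < T.card)
    exact ⟨(i, b), rfl, hb⟩
  · rintro u - ⟨_, b⟩ ⟨rfl, -⟩ huw
    obtain ⟨c, hcT, hcu, hcb⟩ := exists_avoiding u.2 b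
    exact ⟨(_, c), ⟨rfl, hcT⟩, ⟨huw.1, hcu.symm⟩, by simpa using hcb⟩

theorem isFort_twins {G : SimpleGraph α} (H : SimpleGraph β) {i j : α} (hij : i ≠ j)
    (htwin : ∀ k, G.Adj k i ↔ G.Adj k j) (b : β) :
    IsFort (tensorProd G H) {(i, b), (j, b)} := by
  refine ⟨⟨_, .inl rfl⟩, ?_⟩
  rintro u - _ (rfl | rfl) huw
  · exact ⟨(j, b), .inr rfl, ⟨(htwin _).1 huw.1, huw.2⟩, by simpa using hij.symm⟩
  · exact ⟨(i, b), .inl rfl, ⟨(htwin _).2 huw.1, huw.2⟩, by simpa using hij⟩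

end Forts

section TensorComplete

variable {G : SimpleGraph α}

theorem IsPowerDominatingSet.card_le_card_layer_add_two [DecidableEq α] [Fintype β]
    {S : Finset (α × β)} (hS : IsPowerDominatingSet (tensorProd G (⊤ : SimpleGraph β)) ↑S) {i : α}
    (hi : ∀ p ∈ S, ¬ G.Adj p.1 i) : Fintype.card β ≤ (S.filter (·.1 = i)).card + 2 := by
  classical
  by_contra! hlt
  let T : Finset β := ((S.filter (·.1 = i)).image Prod.snd)ᶜ
  have hT : 3 ≤ T.card := by
    have : ((S.filter (·.1 = i)).image Prod.snd).card ≤ (S.filter (·.1 = i)).card :=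
      Finset.card_image_le
    rw [Finset.card_compl]
    omega
  obtain ⟨⟨_, b⟩, ⟨rfl, hbT⟩, hb⟩ :=
    hS.exists_mem_closedNbhd_of_isFort (isFort_layer G i hT)
  rcases hb with hbS | ⟨p, hp, hadj⟩
  · exact Finset.mem_compl.1 hbT (Finset.mem_image_of_mem Prod.snd (by simpa using hbS))
  · exact hi p hp hadj.1

theorem IsPowerDominatingSet.isDominatingSet_image_fst [DecidableEq α] [Fintype β]
    {S : Finset (α × β)} (hS : IsPowerDominatingSet (tensorProd G (⊤ : SimpleGraph β)) ↑S)
    (hβ : 3 ≤ Fintype.card β) : IsDominatingSet G ↑(S.image Prod.fst) := by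
  intro i
  by_cases hi : ∀ p ∈ S, ¬ G.Adj p.1 i
  · have := hS.card_le_card_layer_add_two hi
    obtain ⟨p, hp⟩ := Finset.card_pos.1 (by omega : 0 < (S.filter (·.1 = i)).card)
    obtain ⟨hpS, rfl⟩ := Finset.mem_filter.1 hp
    exact .inl (Finset.mem_image_of_mem _ hpS)
  · push Not at hi
    obtain ⟨p, hpS, hadj⟩ := hi
    exact .inr ⟨p.1, Finset.mem_image_of_mem _ hpS, hadj⟩

theorem IsPowerDominatingSet.card_image_fst_add_card_filter_not_adj_le [DecidableEq α] [Fintype β]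
    {S : Finset (α × β)} [DecidablePred fun i => ∀ p ∈ S, ¬ G.Adj p.1 i]
    (hS : IsPowerDominatingSet (tensorProd G (⊤ : SimpleGraph β)) ↑S)
    (hβ : 4 ≤ Fintype.card β) :
    (S.image Prod.fst).card +
      ((S.image Prod.fst).filter fun i => ∀ p ∈ S, ¬ G.Adj p.1 i).card ≤ S.card := by
  have layer_card (i : α) (hi : i ∈ S.image Prod.fst) :
      1 + (if ∀ p ∈ S, ¬ G.Adj p.1 i then 1 else 0) ≤ (S.filter (·.1 = i)).card := by
    split_ifs with hadj
    · have := hS.card_le_card_layer_add_two hadj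
      omega
    · obtain ⟨p, hpS, rfl⟩ := Finset.mem_image.1 hi
      exact Finset.card_pos.2 ⟨p, by simpa using hpS⟩
  calc
    _ = ∑ i ∈ S.image Prod.fst, (1 + if ∀ p ∈ S, ¬ G.Adj p.1 i then 1 else 0) := by
      rw [Finset.sum_add_distrib, ← Finset.card_eq_sum_ones, ← Finset.card_filter]
    _ ≤ ∑ i ∈ S.image Prod.fst, (S.filter (·.1 = i)).card := Finset.sum_le_sum layer_card
    _ = S.card := (Finset.card_eq_sum_card_image Prod.fst S).symm

theorem IsPowerDominatingSet.exists_isTotalDominatingSet [Fintype β] {S : Finset (α × β)}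
    (hS : IsPowerDominatingSet (tensorProd G (⊤ : SimpleGraph β)) ↑S) (hβ : 4 ≤ Fintype.card β)
    (hG : ∀ v, ∃ u, G.Adj u v) :
    ∃ D : Finset α, IsTotalDominatingSet G ↑D ∧ D.card ≤ S.card := by
  classical
  choose nbr hnbr using hG
  let I := S.image Prod.fst
  let U := I.filter fun i => ∀ p ∈ S, ¬ G.Adj p.1 i
  refine ⟨I ∪ U.image nbr, fun i => ?_, ?_⟩
  · by_cases hi : ∀ p ∈ S, ¬ G.Adj p.1 i
    · have hiI : i ∈ I := by
        rcases hS.isDominatingSet_image_fst (by omega) i with hiI | ⟨u, hu, hadj⟩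
        · exact hiI
        · obtain ⟨p, hp, rfl⟩ := Finset.mem_image.1 hu
          exact absurd hadj (hi p hp)
      have hiU : i ∈ U := Finset.mem_filter.2 ⟨hiI, hi⟩
      exact ⟨nbr i, Finset.mem_union_right _ (Finset.mem_image_of_mem _ hiU), hnbr i⟩
    · push Not at hi
      obtain ⟨p, hpS, hadj⟩ := hi
      exact ⟨p.1, Finset.mem_union_left _ (Finset.mem_image_of_mem _ hpS), hadj⟩
  · exact (Finset.card_union_le _ _).trans <|
      (Nat.add_le_add_left Finset.card_image_le _).trans
        (hS.card_image_fst_add_card_filter_not_adj_le hβ)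

theorem totalDominationNumber_le_powerDominationNumber_tensorProd_top [Fintype α] [Fintype β]
    (hβ : 4 ≤ Fintype.card β) (hG : ∀ v, ∃ u, G.Adj u v) :
    totalDominationNumber G ≤ powerDominationNumber (tensorProd G (⊤ : SimpleGraph β)) := by
  obtain ⟨S, hScard, hS⟩ :=
    exists_isPowerDominatingSet_card_eq (tensorProd G (⊤ : SimpleGraph β))
  obtain ⟨D, hD, hDS⟩ := hS.exists_isTotalDominatingSet hβ hG
  exact (totalDominationNumber_le hD).trans (hDS.trans_eq hScard)

theorem IsTotalDominatingSet.isPowerDominatingSet_prod_singleton [Nontrivial β] {D : Set α}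
    (hD : IsTotalDominatingSet G D) (hskew : IsSkewZeroForcingSet G D) (z : β) :
    IsPowerDominatingSet (tensorProd G (⊤ : SimpleGraph β)) (D ×ˢ {z}) := by
  have off_column (i : α) {b : β} (hb : b ≠ z) :
      ZFClosure (tensorProd G (⊤ : SimpleGraph β)) 
        (closedNbhd (tensorProd G ⊤) (D ×ˢ {z})) (i, b) := by
    obtain ⟨u, hu, hadj⟩ := hD i
    exact .init _ (.inr ⟨(u, z), ⟨hu, rfl⟩, hadj, hb.symm⟩)
  obtain ⟨y, hy⟩ := exists_ne z
  rintro ⟨i, b⟩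
  by_cases hb : b = z
  · subst hb
    induction hskew i with
    | init v hv => exact .init _ (.inl ⟨hv, rfl⟩)
    | force u w huw _ ih =>
      refine .force (u, y) (w, b) (off_column u hy) ⟨huw, hy⟩ ?_
      rintro ⟨x, c⟩ hadj hne
      by_cases hc : c = b
      · subst hc
        exact ih x hadj.1 (by simpa using hne)
      · exact off_column x hc
  · exact off_column i hb

end TensorComplete

section Paths

/-- An open packing of `G`: a set of vertices with pairwise disjoint open neighborhoods. It is the
notion dual to total domination. -/
def IsOpenPacking (G : SimpleGraph V) (P : Set V) : Prop :=
  P.PairwiseDisjoint G.neighborSet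

theorem IsOpenPacking.card_le_of_isTotalDominatingSet {G : SimpleGraph V} {P D : Finset V}
    (hP : IsOpenPacking G ↑P) (hD : IsTotalDominatingSet G ↑D) : P.card ≤ D.card := by
  choose dom hdom hadj using hD
  refine Finset.card_le_card_of_injOn dom (fun v _ => hdom v) fun v hv w hw hvw => ?_
  by_contra hne
  exact Set.disjoint_left.1 (hP hv hw hne) (hadj v).symm (hvw ▸ (hadj w).symm)

variable {t : ℕ}

theorem isOpenPacking_pathGraph (t : ℕ) :
    IsOpenPacking (pathGraph t) {v | v.val % 4 ≤ 1} := by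
  intro v hv w hw hne
  refine Set.disjoint_left.2 fun x hvx hwx => hne (Fin.ext ?_)
  simp only [Set.mem_ofPred_eq, mem_neighborSet, pathGraph_adj] at hv hw hvx hwx
  omega

theorem exists_adj_pathGraph (ht : 2 ≤ t) (v : Fin t) : ∃ u, (pathGraph t).Adj u v := by
  by_cases hv : v.val + 1 < t
  · exact ⟨⟨v + 1, hv⟩, pathGraph_adj.2 (.inr rfl)⟩
  · exact ⟨⟨v - 1, by omega⟩, pathGraph_adj.2 (.inl (by dsimp only; omega))⟩

theorem exists_isTotalDominatingSet_pathGraph (ht : 2 ≤ t) :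
    ∃ D : Finset (Fin t), IsTotalDominatingSet (pathGraph t) ↑D ∧
      D.card ≤ (Finset.univ.filter fun v : Fin t => v.val % 4 ≤ 1).card := by
  let nbr (v : Fin t) : Fin t :=
    if hv : v.val + 1 < t then ⟨v + 1, hv⟩ else ⟨v - 1, by omega⟩
  refine ⟨(Finset.univ.filter fun v : Fin t => v.val % 4 ≤ 1).image nbr, fun v => ?_,
    Finset.card_image_le⟩
  have exists_packed : ∃ w : Fin t, w.val % 4 ≤ 1 ∧ (pathGraph t).Adj (nbr w) v := by
    by_cases hv : v.val % 4 ≤ 1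
    · refine ⟨v, hv, pathGraph_adj.2 ?_⟩
      simp only [nbr]
      split_ifs <;> dsimp only <;> omega
    · refine ⟨⟨v - 2, by omega⟩, by dsimp only; omega, pathGraph_adj.2 ?_⟩
      simp only [nbr]
      split_ifs <;> dsimp only <;> omega
  obtain ⟨w, hw, hadj⟩ := exists_packed
  exact ⟨nbr w, by simpa using ⟨w, hw, rfl⟩, hadj⟩

theorem card_filter_mod_four_le_one (t : ℕ) :
    (Finset.univ.filter fun v : Fin t => v.val % 4 ≤ 1).card = (t + 2) / 4 + (t + 3) / 4 := by
  rw [Finset.card_filter, ← Finset.sum_range fun v => if v % 4 ≤ 1 then 1 else 0]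
  induction t with
  | zero => rfl
  | succ t ih =>
    rw [Finset.sum_range_succ, ih]
    split_ifs <;> omega

theorem totalDominationNumber_pathGraph (ht : 2 ≤ t) :
    totalDominationNumber (pathGraph t) = (t + 2) / 4 + (t + 3) / 4 := by
  rw [← card_filter_mod_four_le_one]
  apply le_antisymm
  · obtain ⟨D, hD, hcard⟩ := exists_isTotalDominatingSet_pathGraph ht
    exact (totalDominationNumber_le hD).trans hcard
  · obtain ⟨D, hcard, hD⟩ := exists_isTotalDominatingSet_card_eq (exists_adj_pathGraph ht)
    rw [← hcard]
    exact IsOpenPacking.card_le_of_isTotalDominatingSet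
      (by simpa using isOpenPacking_pathGraph t) hD

theorem IsTotalDominatingSet.isSkewZeroForcingSet_pathGraph {D : Set (Fin t)}
    (hD : IsTotalDominatingSet (pathGraph t) D) : IsSkewZeroForcingSet (pathGraph t) D := by
  rintro ⟨v, hv⟩
  induction v using Nat.strong_induction_on with
  | _ v ih =>
    rcases Nat.eq_zero_or_pos v with rfl | hpos
    · -- `D` contains a neighbor of `1`: either `0` itself, or `2`, and then `1` forces `0`.
      obtain ⟨u, -, hu⟩ := hD ⟨0, hv⟩
      obtain ⟨x, hx, hxu⟩ := hD u
      by_cases hx0 : x = ⟨0, hv⟩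
      · exact .init _ (hx0 ▸ hx)
      refine .force u _ hu fun y huy hy => ?_
      have hyx : y = x := by
        simp only [pathGraph_adj, Ne, Fin.ext_iff] at hu hxu hx0 huy hy ⊢
        omega
      exact .init _ (hyx ▸ hx)
    · refine .force ⟨v - 1, by omega⟩ _ (pathGraph_adj.2 (.inl (by dsimp only; omega)))
        fun y huy hy => ih y.val ?_ y.isLt
      simp only [pathGraph_adj, Ne, Fin.ext_iff] at huy hy
      omega

end Paths

section PathTensorComplete

variable {t n : ℕ}

theorem powerDominationNumber_tensorProd_pathGraph_top_le (ht : 2 ≤ t) (hn : 2 ≤ n) :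
    powerDominationNumber (tensorProd (pathGraph t) (⊤ : SimpleGraph (Fin n))) ≤
      totalDominationNumber (pathGraph t) := by
  have : Nontrivial (Fin n) := Fin.nontrivial_iff_two_le.2 hn
  obtain ⟨D, hcard, hD⟩ := exists_isTotalDominatingSet_card_eq (exists_adj_pathGraph ht)
  have hS : IsPowerDominatingSet (tensorProd (pathGraph t) (⊤ : SimpleGraph (Fin n)))
      ↑(D ×ˢ {(⟨0, by omega⟩ : Fin n)}) := by
    rw [Finset.coe_product, Finset.coe_singleton]
    exact hD.isPowerDominatingSet_prod_singleton hD.isSkewZeroForcingSet_pathGraph _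
  simpa [hcard] using powerDominationNumber_le hS

theorem powerDominationNumber_tensorProd_pathGraph_top (ht : 2 ≤ t) (hn : 4 ≤ n) :
    powerDominationNumber (tensorProd (pathGraph t) (⊤ : SimpleGraph (Fin n))) =
      totalDominationNumber (pathGraph t) :=
  (powerDominationNumber_tensorProd_pathGraph_top_le ht (by omega)).antisymm <|
    totalDominationNumber_le_powerDominationNumber_tensorProd_top (by simpa using hn)
      (exists_adj_pathGraph ht)

theorem one_le_powerDominationNumber_tensorProd_top [Fintype α] [Nonempty α] [Fintype β]
    (G : SimpleGraph α) (hβ : 3 ≤ Fintype.card β) :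
    1 ≤ powerDominationNumber (tensorProd G (⊤ : SimpleGraph β)) := by
  classical
  obtain ⟨S, hcard, hS⟩ := exists_isPowerDominatingSet_card_eq (tensorProd G (⊤ : SimpleGraph β))
  rw [← hcard, Nat.one_le_iff_ne_zero, Finset.card_ne_zero]
  rcases hS.isDominatingSet_image_fst hβ (Classical.arbitrary α) with h | ⟨u, h, -⟩ <;>
    exact Finset.image_nonempty.1 ⟨_, h⟩

theorem eq_one_of_isDominatingSet_singleton_pathGraph (ht : 3 ≤ t) {j : Fin t}
    (hj : IsDominatingSet (pathGraph t) {j}) : t = 3 ∧ j.val = 1 := by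
  have near (i : Fin t) : i.val = j.val ∨ j.val + 1 = i.val ∨ i.val + 1 = j.val := by
    simpa [closedNbhd, pathGraph_adj, ← Fin.ext_iff] using hj i
  have hfirst := near ⟨0, by omega⟩
  have hlast := near ⟨t - 1, by omega⟩
  dsimp only at hfirst hlast
  omega

theorem two_le_powerDominationNumber_tensorProd_pathGraph_top (ht : 3 ≤ t) (hn : 3 ≤ n) :
    2 ≤ powerDominationNumber (tensorProd (pathGraph t) (⊤ : SimpleGraph (Fin n))) := by
  have : Nonempty (Fin t) := ⟨⟨0, by omega⟩⟩
  have hpos := one_le_powerDominationNumber_tensorProd_top (β := Fin n) (pathGraph t) (by simpa)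
  obtain ⟨S, hcard, hS⟩ :=
    exists_isPowerDominatingSet_card_eq (tensorProd (pathGraph t) (⊤ : SimpleGraph (Fin n)))
  by_contra! hlt
  obtain ⟨⟨j, a⟩, rfl⟩ := Finset.card_eq_one.1 (by omega : S.card = 1)
  have hdom : IsDominatingSet (pathGraph t) {j} := by
    simpa using hS.isDominatingSet_image_fst (by simpa using hn)
  obtain ⟨rfl, hj⟩ := eq_one_of_isDominatingSet_singleton_pathGraph ht hdom
  have hfort : IsFort (tensorProd (pathGraph 3) (⊤ : SimpleGraph (Fin n))) {(0, a), (2, a)} :=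
    isFort_twins _ (by decide) (by simp only [pathGraph_adj]; decide) a
  obtain ⟨w, hw, hwS⟩ := hS.exists_mem_closedNbhd_of_isFort hfort
  obtain rfl : j = 1 := Fin.ext hj
  rcases hw with rfl | rfl <;> simp [closedNbhd, tensorProd] at hwS

theorem isPowerDominatingSet_tensorProd_pathGraph_two_top_three :
    IsPowerDominatingSet (tensorProd (pathGraph 2) (⊤ : SimpleGraph (Fin 3))) {(0, 0)} := by
  -- The graph is a 6-cycle, around which the forces propagate from the dominated vertices.
  have third : ∀ b : Fin 3, b ≠ 0 → -b ≠ 0 ∧ -b ≠ b ∧ ∀ x, x ≠ -b → x ≠ b → x = 0 := by decide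
  let C := ZFClosure (tensorProd (pathGraph 2) (⊤ : SimpleGraph (Fin 3)))
    (closedNbhd (tensorProd (pathGraph 2) ⊤) {(0, 0)})
  have center : C (0, 0) := .init _ (.inl rfl)
  have dominated (b : Fin 3) (hb : b ≠ 0) : C (1, b) :=
    .init _ (.inr ⟨_, rfl, by simp [pathGraph_adj], hb.symm⟩)
  have forced (b : Fin 3) (hb : b ≠ 0) : C (0, b) := by
    obtain ⟨hc0, hcb, hother⟩ := third b hb
    refine .force (1, -b) _ (dominated _ hc0) ⟨by simp [pathGraph_adj], hcb⟩ ?_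
    rintro ⟨i, x⟩ ⟨hi, hx⟩ hne
    obtain rfl : i = 0 := by simp only [pathGraph_adj] at hi; omega
    rw [hother x hx.symm (by simpa using hne)]
    exact center
  have antipode : C (1, 0) := by
    refine .force (0, 1) _ (forced 1 (by decide)) ⟨by simp [pathGraph_adj], by decide⟩ ?_
    rintro ⟨i, x⟩ ⟨hi, -⟩ hne
    obtain rfl : i = 1 := by simp only [pathGraph_adj] at hi; omega
    exact dominated x (by simpa using hne)
  rintro ⟨i, b⟩
  by_cases hb : b = 0
  · subst hb
    fin_cases i
    exacts [center, antipode]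
  · fin_cases i
    exacts [forced b hb, dominated b hb]

end PathTensorComplete

theorem stmt13_general (t n : ℕ) (ht : 2 ≤ t) (h : 4 ≤ n ∨ n = 3 ∧ t ≤ 4) :
    powerDominationNumber (tensorProd (pathGraph t) (⊤ : SimpleGraph (Fin n))) =
      if t = 2 ∧ n = 3 then 1 else (t + 2) / 4 + (t + 3) / 4 := by
  have hupper := powerDominationNumber_tensorProd_pathGraph_top_le ht (by omega : 2 ≤ n)
  rw [← totalDominationNumber_pathGraph ht]
  split_ifs with hexc
  · obtain ⟨rfl, rfl⟩ := hexc
    exact (powerDominationNumber_le (S := {(0, 0)})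
      (by simpa using isPowerDominatingSet_tensorProd_pathGraph_two_top_three)).antisymm
      (one_le_powerDominationNumber_tensorProd_top _ (by simp))
  · rcases h with hn | ⟨rfl, ht4⟩
    · exact powerDominationNumber_tensorProd_pathGraph_top ht hn
    · refine hupper.antisymm (le_trans ?_
        (two_le_powerDominationNumber_tensorProd_pathGraph_top (by omega) le_rfl))
      rw [totalDominationNumber_pathGraph ht]
      omega

/-- Let `t ≥ 2` and suppose `t` is odd with `n ≥ t`, or `t` is even
with `n ≥ t/2 + 2`. Then `γ_P(P_t × K_n) = ⌈t/2⌉` if `t ≢ 2 (mod 4)`, and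
`γ_P(P_t × K_n) ∈ {t/2, t/2 + 1}` if `t ≡ 2 (mod 4)`. -/
theorem stmt13 (t n : ℕ) (ht : 2 ≤ t)
    (h : (Odd t ∧ t ≤ n) ∨ (Even t ∧ t / 2 + 2 ≤ n)) :
    (t % 4 ≠ 2 →
      powerDominationNumber (tensorProd (pathGraph t) (⊤ : SimpleGraph (Fin n))) = (t + 1) / 2) ∧
    (t % 4 = 2 →
      powerDominationNumber (tensorProd (pathGraph t) (⊤ : SimpleGraph (Fin n))) = t / 2 ∨
      powerDominationNumber (tensorProd (pathGraph t) (⊤ : SimpleGraph (Fin n))) = t / 2 + 1) := by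
  rw [stmt13_general t n ht (by rw [Nat.odd_iff] at h; omega)]
  split_ifs <;> omega

end PaperPD
end
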